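/- arXiv:1209.0102 — 2 statements merged into one kernel-verified Lean document; each statement's English description precedes it below -/
import Mathlib

section
/- Let N be a nonempty finite set, (K,V) a finite simplicial complex, f : K → PN a subdivision, I a nonempty finite set, (c_i)_{i∈I} a family of Sperner colorings of f, and m : I → ℕ a family of sizes with ∑_{i∈I} m i = |N| − 1. Then there exists a face σ ∈ K such that |c_i(σ)| > m i for every i ∈ I and ⋃_{i∈I} c_i(σ) = N. -/
open scoped Classical

/-- A finite simplicial complex on the vertex set `V`: a collection of finite subsets of `V`
(faces) closed under taking subsets. -/
def IsComplex {V : Type*} (K : Finset (Finset V)) : Prop :=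
  ∀ A ∈ K, ∀ B, B ⊆ A → B ∈ K

/-- The support of `k : V → ℝ`, i.e. `{v : k v > 0}`. -/
noncomputable def spt {V : Type*} [Fintype V] (k : V → ℝ) : Finset V :=
  Finset.univ.filter (fun v => 0 < k v)

/-- The geometric realization of a complex `K` as a subspace of `ℝ^V`. -/
def realization {V : Type*} [Fintype V] (K : Finset (Finset V)) : Set (V → ℝ) :=
  {k | (∀ v, 0 ≤ k v) ∧ ∑ v, k v = 1 ∧ spt k ∈ K}

/-- `f` is an order preserving map from `K` to `K'`:
`A ⊆ B ∈ K` implies `f A ⊆ f B ∈ K'`. -/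
def IsOrderPreserving {V V' : Type*} (K : Finset (Finset V)) (K' : Finset (Finset V'))
    (f : Finset V → Finset V') : Prop :=
  ∀ A B, B ∈ K → A ⊆ B → f A ⊆ f B ∧ f B ∈ K'

/-- `f` is a subdivision: an order preserving map `K → K'` for which there is a homeomorphism
`h : |K| → |K'|` with `spt (h k) = f (spt k)` for all `k ∈ |K|`. -/
def IsSubdivision {V V' : Type*} [Fintype V] [Fintype V'] (K : Finset (Finset V))
    (K' : Finset (Finset V')) (f : Finset V → Finset V') : Prop :=
  IsOrderPreserving K K' f ∧
  ∃ h : realization K ≃ₜ realization K',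
    ∀ k : realization K, spt ((h k : V' → ℝ)) = f (spt (k : V → ℝ))

/-- A Sperner coloring of a subdivision `f : K → K'`: a simplicial map `c : K → K'`
(induced by a vertex map) with `c A ⊆ f A` for every face `A ∈ K`. -/
def IsSpernerColoring {V V' : Type*} [DecidableEq V'] (K : Finset (Finset V))
    (K' : Finset (Finset V')) (f : Finset V → Finset V')
    (c : Finset V → Finset V') : Prop :=
  (∃ c₀ : V → V', ∀ A : Finset V, c A = A.image c₀) ∧
  (∀ A ∈ K, c A ∈ K') ∧ (∀ A ∈ K, c A ⊆ f A)

lemma sp_pigeon {α β : Type*} (S : Finset α) (g : α → β)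
    (h : S.card = (S.image g).card + 1) :
    ∃ a ∈ S, ∃ b ∈ S, a ≠ b ∧
      ∀ j ∈ S, ((S.erase j).image g = S.image g ↔ j = a ∨ j = b) := by
  obtain ⟨a, ha, b, hb, hab, hg⟩ : ∃ a ∈ S, ∃ b ∈ S, a ≠ b ∧ g a = g b :=
    Finset.exists_ne_map_eq_of_card_lt_of_maps_to (t := S.image g) (by omega)
      (fun x hx => Finset.mem_image_of_mem _ hx)
  have key : ∀ p ∈ S, ∀ q ∈ S, p ≠ q → g p = g q → (S.erase p).image g = S.image g := by
    intro p hp q hq hpq hg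
    apply Finset.Subset.antisymm (Finset.image_subset_image (Finset.erase_subset _ _))
    intro y hy
    obtain ⟨x, hx, rfl⟩ := Finset.mem_image.1 hy
    by_cases hxp : x = p
    · subst hxp
      exact Finset.mem_image.2 ⟨q, Finset.mem_erase.2 ⟨hpq.symm, hq⟩, hg.symm⟩
    · exact Finset.mem_image_of_mem _ (Finset.mem_erase.2 ⟨hxp, hx⟩)
  refine ⟨a, ha, b, hb, hab, fun j hj => ⟨fun he => ?_, ?_⟩⟩
  · by_contra hcon
    push Not at hcon
    have hinj : Set.InjOn g (S.erase j : Finset α) := by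
      rw [← Finset.card_image_iff, he, Finset.card_erase_of_mem hj]; omega
    exact hab (hinj (Finset.mem_coe.2 (Finset.mem_erase.2 ⟨hcon.1.symm, ha⟩))
      (Finset.mem_coe.2 (Finset.mem_erase.2 ⟨hcon.2.symm, hb⟩)) hg)
  · rintro (rfl | rfl)
    · exact key _ ha b hb hab hg
    · exact key _ hb a ha hab.symm hg.symm

/-- `σ` is dominant with respect to `C`. -/
def SpDom {T I : Type*} (r : I → T → ℕ) (σ : Finset T) (C : Finset I) : Prop :=
  ∀ y, ∃ i ∈ C, ∀ x ∈ σ, r i y ≤ r i x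

/-- `D` is a door of the room `R`. -/
def SpInc {T I : Type*} (R D : Finset T × Finset I) : Prop :=
  (D.2 = R.2 ∧ ∃ x ∈ R.1, D.1 = R.1.erase x) ∨ (D.1 = R.1 ∧ ∃ j, j ∉ R.2 ∧ D.2 = insert j R.2)

def SpRoom {T I : Type*} (r : I → T → ℕ) (R : Finset T × Finset I) : Prop :=
  SpDom r R.1 R.2 ∧ R.1.card = R.2.card

def SpDoor {T I : Type*} (r : I → T → ℕ) (c : T → I) (i0 : I) (D : Finset T × Finset I) : Prop :=
  SpDom r D.1 D.2 ∧ D.2.card = D.1.card + 1 ∧ i0 ∈ D.2 ∧ D.1.image c = D.2.erase i0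

lemma SpDom.mono {T I : Type*} {r : I → T → ℕ} {σ τ : Finset T} {C D : Finset I}
    (h : SpDom r σ C) (h1 : τ ⊆ σ) (h2 : C ⊆ D) : SpDom r τ D := by
  intro y
  obtain ⟨i, hi, hx⟩ := h y
  exact ⟨i, h2 hi, fun x hx' => hx x (h1 hx')⟩

lemma sp_inc_iff {T I : Type*} (R D : Finset T × Finset I) :
    SpInc R D ↔ (∃ y, y ∉ D.1 ∧ R = (insert y D.1, D.2)) ∨ (∃ j ∈ D.2, R = (D.1, D.2.erase j)) := by
  obtain ⟨σ, C⟩ := R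
  obtain ⟨τ, D⟩ := D
  simp only [SpInc, Prod.mk.injEq]
  constructor
  · rintro (⟨rfl, x, hx, rfl⟩ | ⟨rfl, j, hj, rfl⟩)
    · exact Or.inl ⟨x, Finset.notMem_erase _ _, (Finset.insert_erase hx).symm, rfl⟩
    · exact Or.inr ⟨j, Finset.mem_insert_self _ _, rfl, (Finset.erase_insert hj).symm⟩
  · rintro (⟨y, hy, rfl, rfl⟩ | ⟨j, hj, rfl, rfl⟩)
    · exact Or.inl ⟨rfl, y, Finset.mem_insert_self _ _, (Finset.erase_insert hy).symm⟩
    · exact Or.inr ⟨rfl, j, Finset.notMem_erase _ _, (Finset.insert_erase hj).symm⟩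

lemma sp_min {T I : Type*} (r : I → T → ℕ) (hr : ∀ i, Function.Injective (r i))
    (σ : Finset T) (hσ : σ.Nonempty) (C : Finset I) (h : SpDom r σ C) :
    ∃ μ : I → T, (∀ i, μ i ∈ σ) ∧ (∀ i, ∀ z ∈ σ, r i (μ i) ≤ r i z) ∧ C.image μ = σ := by
  choose μ h1 h2 using fun i => Finset.exists_min_image σ (r i) hσ
  refine ⟨μ, h1, h2, ?_⟩
  ext x
  constructor
  · intro hx
    obtain ⟨i, _, rfl⟩ := Finset.mem_image.1 hx
    exact h1 i
  · intro hx
    obtain ⟨i, hi, hh⟩ := h x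
    exact Finset.mem_image.2 ⟨i, hi, hr i (le_antisymm (h2 i x hx) (hh _ (h1 i)))⟩

/-- the room obtained by passing through index `a`: existence and uniqueness -/
lemma sp_door_two {T I : Type*} [Fintype T] [Fintype I] (r : I → T → ℕ)
    (hr : ∀ i, Function.Injective (r i)) (τ : Finset T) (D : Finset I) (hτ : τ.Nonempty)
    (hd : SpDom r τ D) (hcard : D.card = τ.card + 1) :
    (Finset.univ.filter (fun R => SpRoom r R ∧ SpInc R (τ, D))).card = 2 := by
  obtain ⟨μ, hμ, hmin, him⟩ := sp_min r hr τ hτ D hd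
  obtain ⟨a, ha, b, hb, hab, hj⟩ := sp_pigeon D μ (by rw [him, hcard])
  rw [him] at hj
  -- rooms through `j`
  let P : I → Finset T × Finset I → Prop := fun j R =>
    R = (τ, D.erase j) ∨ ∃ y, y ∉ τ ∧ R = (insert y τ, D) ∧ ∀ k ∈ D.erase j, r k (μ k) < r k y
  have hex : ∀ j ∈ D, (D.erase j).image μ = τ → ∃ R, SpRoom r R ∧ P j R := by
    intro j hjD hjim
    by_cases hdj : SpDom r τ (D.erase j)
    · refine ⟨(τ, D.erase j), ⟨hdj, ?_⟩, Or.inl rfl⟩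
      simp only [Finset.card_erase_of_mem hjD]; omega
    · simp only [SpDom] at hdj
      push Not at hdj
      obtain ⟨y0, hy0⟩ := hdj
      have hmem : ∀ y, y ∈ Finset.univ.filter (fun y => ∀ k ∈ D.erase j, r k (μ k) < r k y) ↔
          ∀ k ∈ D.erase j, r k (μ k) < r k y := by intro y; simp
      obtain ⟨y, hy, hmax⟩ := Finset.exists_max_image
        (Finset.univ.filter (fun y => ∀ k ∈ D.erase j, r k (μ k) < r k y)) (r j)
        ⟨y0, (hmem _).2 (fun k hk => by
          obtain ⟨x, hx, hlt⟩ := hy0 k hk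
          exact lt_of_le_of_lt (hmin k x hx) hlt)⟩
      rw [hmem] at hy
      have hyτ : y ∉ τ := by
        intro hyτ
        rw [← hjim] at hyτ
        obtain ⟨k, hk, rfl⟩ := Finset.mem_image.1 hyτ
        exact lt_irrefl _ (hy k hk)
      refine ⟨(insert y τ, D), ⟨?_, ?_⟩, Or.inr ⟨y, hyτ, rfl, hy⟩⟩
      · intro z
        by_cases hz : ∀ k ∈ D.erase j, r k (μ k) < r k z
        · refine ⟨j, hjD, fun x hx => ?_⟩
          have hzy := hmax z ((hmem z).2 hz)
          rcases Finset.mem_insert.1 hx with rfl | hx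
          · exact hzy
          · obtain ⟨i, hi, hi2⟩ := hd y
            have : i = j := by
              by_contra hne
              exact absurd (hi2 _ (hμ i)) (not_le.2 (hy i (Finset.mem_erase.2 ⟨hne, hi⟩)))
            subst this
            exact hzy.trans (hi2 x hx)
        · push Not at hz
          obtain ⟨k, hk, hkz⟩ := hz
          refine ⟨k, Finset.mem_of_mem_erase hk, fun x hx => ?_⟩
          rcases Finset.mem_insert.1 hx with rfl | hx
          · exact hkz.trans (hy k hk).le
          · exact hkz.trans (hmin k x hx)
      · simp only [Finset.card_insert_of_notMem hyτ]; omega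
  have huniq : ∀ j ∈ D, ∀ R R', SpRoom r R → SpRoom r R' → P j R → P j R' → R = R' := by
    have aux : ∀ j, ∀ y, SpRoom r (τ, D.erase j) → (∀ k ∈ D.erase j, r k (μ k) < r k y) → False := by
      intro j y hR hy
      obtain ⟨i, hi, h⟩ := hR.1 y
      exact absurd (h _ (hμ i)) (not_le.2 (hy i hi))
    have aux2 : ∀ j, ∀ y y', SpRoom r (insert y τ, D) → (∀ k ∈ D.erase j, r k (μ k) < r k y') →
        r j y' ≤ r j y := by
      intro j y y' hR hy
      obtain ⟨i, hi, h⟩ := hR.1 y'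
      by_cases hij : i = j
      · subst hij
        exact h y (Finset.mem_insert_self _ _)
      · exact absurd (h _ (Finset.mem_insert_of_mem (hμ i)))
          (not_le.2 (hy i (Finset.mem_erase.2 ⟨hij, hi⟩)))
    rintro j hjD R R' hR hR' (rfl | ⟨y, hy, rfl, hyk⟩) (rfl | ⟨y', hy', rfl, hyk'⟩)
    · rfl
    · exact (aux j y' hR hyk').elim
    · exact (aux j y hR' hyk).elim
    · rw [hr j (le_antisymm (aux2 j _ _ hR' hyk) (aux2 j _ _ hR hyk'))]
  have hall : ∀ R, SpRoom r R → SpInc R (τ, D) →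
      ∃ j ∈ D, (D.erase j).image μ = τ ∧ P j R := by
    intro R hR hinc
    rcases (sp_inc_iff _ _).1 hinc with ⟨y, hy, rfl⟩ | ⟨j, hjD, rfl⟩
    · simp only at hy hR
      obtain ⟨ρ, hρ, hρmin, hρim⟩ := sp_min r hr _ (Finset.insert_nonempty y τ) D hR.1
      have hinj : Set.InjOn ρ (D : Finset I) := by
        rw [← Finset.card_image_iff, hρim]; exact hR.2
      obtain ⟨j, hjD, hjy⟩ := Finset.mem_image.1 (hρim ▸ Finset.mem_insert_self y τ)
      have hk : ∀ k ∈ D, k ≠ j → ρ k = μ k ∧ r k (μ k) < r k y := by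
        intro k hk hkj
        have h1 : ρ k ≠ y := fun h => hkj (hinj hk hjD (h.trans hjy.symm))
        have h2 : ρ k ∈ τ := (Finset.mem_insert.1 (hρ k)).resolve_left h1
        have h3 : ρ k = μ k := hr k (le_antisymm
          (hρmin k _ (Finset.mem_insert_of_mem (hμ k))) (hmin k _ h2))
        refine ⟨h3, lt_of_le_of_ne ?_ ?_⟩
        · rw [← h3]; exact hρmin k _ (Finset.mem_insert_self _ _)
        · intro h; exact h1 (h3.trans (hr k h))
      refine ⟨j, hjD, ?_, Or.inr ⟨y, hy, rfl, fun k hkm => ?_⟩⟩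
      · ext x
        constructor
        · intro hx
          obtain ⟨i, _, rfl⟩ := Finset.mem_image.1 hx
          exact hμ i
        · intro hx
          obtain ⟨k, hkD, hkx⟩ := Finset.mem_image.1 (hρim ▸ Finset.mem_insert_of_mem hx)
          have hkj : k ≠ j := by
            rintro rfl
            exact hy (hjy ▸ hkx ▸ hx)
          exact Finset.mem_image.2 ⟨k, Finset.mem_erase.2 ⟨hkj, hkD⟩, (hk k hkD hkj).1 ▸ hkx⟩
      · exact (hk k (Finset.mem_of_mem_erase hkm) (Finset.ne_of_mem_erase hkm)).2
    · refine ⟨j, hjD, ?_, Or.inl rfl⟩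
      obtain ⟨ρ, hρ, hρmin, hρim⟩ := sp_min r hr _ hτ _ hR.1
      have : ρ = μ := funext fun k => hr k (le_antisymm (hρmin k _ (hμ k)) (hmin k _ (hρ k)))
      rw [← this]; exact hρim
  have hPinc : ∀ j ∈ D, ∀ R, P j R → SpInc R (τ, D) := by
    rintro j hjD R (rfl | ⟨y, hy, rfl, -⟩)
    · exact (sp_inc_iff _ _).2 (Or.inr ⟨j, hjD, rfl⟩)
    · exact (sp_inc_iff _ _).2 (Or.inl ⟨y, hy, rfl⟩)
  obtain ⟨A, hA, hPA⟩ := hex a ha ((hj a ha).2 (Or.inl rfl))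
  obtain ⟨B, hB, hPB⟩ := hex b hb ((hj b hb).2 (Or.inr rfl))
  have hAB : A ≠ B := by
    intro h
    subst h
    rcases hPA with rfl | ⟨y, hy, rfl, hyk⟩
    · rcases hPB with h | ⟨y', hy', h, hyk'⟩
      · have := (Prod.mk.inj h).2
        exact Finset.notMem_erase a D (this ▸ Finset.mem_erase.2 ⟨hab, ha⟩)
      · have := (Prod.mk.inj h).2
        exact Finset.notMem_erase a D (this.symm ▸ ha)
    · rcases hPB with h | ⟨y', hy', h, hyk'⟩
      · have := (Prod.mk.inj h).2
        exact Finset.notMem_erase b D (this ▸ hb)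
      · have h1 := (Prod.mk.inj h).1
        have : y = y' := by
          have := h1 ▸ Finset.mem_insert_self y τ
          exact (Finset.mem_insert.1 this).resolve_right hy
        subst this
        obtain ⟨i, hi, hh⟩ := hd y
        by_cases hia : i = a
        · subst hia
          exact absurd (hh _ (hμ i)) (not_le.2 (hyk' i (Finset.mem_erase.2 ⟨hab, hi⟩)))
        · exact absurd (hh _ (hμ i)) (not_le.2 (hyk i (Finset.mem_erase.2 ⟨hia, hi⟩)))
  rw [← Finset.card_pair hAB]
  congr 1
  ext R
  simp only [Finset.mem_filter, Finset.mem_univ, true_and, Finset.mem_insert,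
    Finset.mem_singleton]
  constructor
  · rintro ⟨hR, hinc⟩
    obtain ⟨j, hjD, hjim, hP⟩ := hall R hR hinc
    rcases (hj j hjD).1 hjim with rfl | rfl
    · exact Or.inl (huniq _ hjD _ _ hR hA hP hPA)
    · exact Or.inr (huniq _ hjD _ _ hR hB hP hPB)
  · rintro (rfl | rfl)
    · exact ⟨hA, hPinc a ha _ hPA⟩
    · exact ⟨hB, hPinc b hb _ hPB⟩

lemma sp_door_one {T I : Type*} [Fintype T] [Fintype I] [Nonempty T] (r : I → T → ℕ)
    (hr : ∀ i, Function.Injective (r i)) (i0 : I) :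
    (Finset.univ.filter (fun R => SpRoom r R ∧ SpInc R (∅, {i0}))).card = 1 := by
  obtain ⟨y, -, hy⟩ := Finset.exists_max_image (Finset.univ : Finset T) (r i0)
    Finset.univ_nonempty
  rw [Finset.card_eq_one]
  refine ⟨({y}, {i0}), ?_⟩
  ext R
  simp only [Finset.mem_filter, Finset.mem_univ, true_and, Finset.mem_singleton, sp_inc_iff]
  constructor
  · rintro ⟨hR, ⟨z, -, rfl⟩ | ⟨j, hj, rfl⟩⟩
    · obtain ⟨i, hi, h⟩ := hR.1 y
      simp only [Finset.mem_singleton] at hi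
      subst hi
      have : y = z := hr i (le_antisymm (h z (by simp)) (hy z (Finset.mem_univ _)))
      subst this
      simp
    · exfalso
      subst hj
      obtain ⟨i, hi, -⟩ := hR.1 y
      simp at hi
  · rintro rfl
    refine ⟨⟨fun z => ⟨i0, by simp, fun x hx => ?_⟩, by simp⟩, Or.inl ⟨y, by simp, by simp⟩⟩
    simp only [Finset.mem_singleton] at hx
    subst hx
    exact hy z (Finset.mem_univ _)

lemma sp_room_even {T I : Type*} [Fintype T] [Fintype I] (r : I → T → ℕ) (c : T → I) (i0 : I)
    (R : Finset T × Finset I) (hR : SpRoom r R) (hnc : R.1.image c ≠ R.2) :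
    Even (Finset.univ.filter (fun D => SpDoor r c i0 D ∧ SpInc R D)).card := by
  obtain ⟨σ, C⟩ := R
  obtain ⟨hdom, hcard⟩ := hR
  simp only at hdom hcard hnc
  have hdoor : ∀ D, (SpDoor r c i0 D ∧ SpInc (σ, C) D) ↔ i0 ∈ D.2 ∧ D.1.image c = D.2.erase i0 ∧
      SpInc (σ, C) D := by
    intro D
    constructor
    · rintro ⟨⟨_, _, h1, h2⟩, h3⟩; exact ⟨h1, h2, h3⟩
    · rintro ⟨h1, h2, h3⟩
      refine ⟨⟨?_, ?_, h1, h2⟩, h3⟩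
      · rcases h3 with ⟨h4, x, hx, h5⟩ | ⟨h4, j, hj, h5⟩
        · rw [h4, h5]; exact hdom.mono (Finset.erase_subset _ _) subset_rfl
        · rw [h4, h5]; exact hdom.mono subset_rfl (Finset.subset_insert _ _)
      · rcases h3 with ⟨h4, x, hx, h5⟩ | ⟨h4, j, hj, h5⟩
        · simp only at h4 h5 hx
          rw [h4, h5, Finset.card_erase_of_mem hx, ← hcard]
          have := Finset.card_pos.2 ⟨x, hx⟩
          omega
        · simp only at h4 h5 hj
          rw [h4, h5, Finset.card_insert_of_notMem hj, hcard]
  simp only [hdoor]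
  by_cases hi0 : i0 ∈ C
  swap
  · -- no doors
    rw [Finset.filter_eq_empty_iff.2, Finset.card_empty]
    · exact Even.zero
    rintro ⟨τ, D⟩ - ⟨h1, h2, ⟨h4, x, hx, h5⟩ | ⟨h4, j, hj, h5⟩⟩
    · simp only at h1 h4; subst h4; exact hi0 h1
    · simp only at *
      subst h4 h5
      have : i0 = j := (Finset.mem_insert.1 h1).resolve_right hi0
      subst this
      rw [Finset.erase_insert hj] at h2
      exact hnc h2
  by_cases hA : σ.image c = C.erase i0
  · have hCpos := Finset.card_pos.2 ⟨i0, hi0⟩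
    obtain ⟨a, ha, b, hb, hab, hj⟩ := sp_pigeon σ c (by
      rw [hA, Finset.card_erase_of_mem hi0]; omega)
    have hne : ((σ.erase a, C) : Finset T × Finset I) ≠ (σ.erase b, C) := by
      intro h
      have := (Prod.mk.inj h).1
      exact Finset.notMem_erase a σ (this ▸ Finset.mem_erase.2 ⟨hab, ha⟩)
    have : Finset.univ.filter (fun D : Finset T × Finset I => i0 ∈ D.2 ∧
        D.1.image c = D.2.erase i0 ∧ SpInc (σ, C) D) = {(σ.erase a, C), (σ.erase b, C)} := by
      ext ⟨τ, D⟩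
      simp only [Finset.mem_filter, Finset.mem_univ, true_and, Finset.mem_insert,
        Finset.mem_singleton]
      simp only [SpInc]
      constructor
      · rintro ⟨h1, h2, ⟨h4, x, hx, h5⟩ | ⟨h4, j, hjC, h5⟩⟩
        · subst h4 h5
          rw [← hA] at h2
          rcases (hj x hx).1 h2 with rfl | rfl
          · exact Or.inl rfl
          · exact Or.inr rfl
        · subst h4 h5
          exfalso
          have hji : j ≠ i0 := by rintro rfl; exact hjC hi0
          have : j ∈ C.erase i0 := by
            rw [← hA, h2]; simp [hji]
          exact hjC (Finset.mem_of_mem_erase this)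
      · rintro (h | h) <;> obtain ⟨rfl, rfl⟩ := Prod.mk.inj h
        · exact ⟨hi0, ((hj a ha).2 (Or.inl rfl)).trans hA, Or.inl ⟨rfl, a, ha, rfl⟩⟩
        · exact ⟨hi0, ((hj b hb).2 (Or.inr rfl)).trans hA, Or.inl ⟨rfl, b, hb, rfl⟩⟩
    rw [this, Finset.card_pair hne]
    exact even_two
  by_cases hB : ∃ j, j ∉ C ∧ σ.image c = insert j (C.erase i0)
  · obtain ⟨j, hjC, hB⟩ := hB
    have hji : j ≠ i0 := by rintro rfl; exact hjC hi0
    have hjC' : j ∉ C.erase i0 := fun h => hjC (Finset.mem_of_mem_erase h)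
    have hCpos := Finset.card_pos.2 ⟨i0, hi0⟩
    have hinj : Set.InjOn c (σ : Finset T) := by
      rw [← Finset.card_image_iff, hB, Finset.card_insert_of_notMem hjC',
        Finset.card_erase_of_mem hi0]
      omega
    obtain ⟨x0, hx0, hcx⟩ := Finset.mem_image.1 (hB ▸ Finset.mem_insert_self j (C.erase i0))
    have hne : ((σ.erase x0, C) : Finset T × Finset I) ≠ (σ, insert j C) := by
      intro h
      have := (Prod.mk.inj h).1
      exact Finset.notMem_erase x0 σ (this.symm ▸ hx0)
    have hBi : (insert j C).erase i0 = insert j (C.erase i0) :=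
      Finset.erase_insert_of_ne hji
    have : Finset.univ.filter (fun D : Finset T × Finset I => i0 ∈ D.2 ∧
        D.1.image c = D.2.erase i0 ∧ SpInc (σ, C) D) = {(σ.erase x0, C), (σ, insert j C)} := by
      ext ⟨τ, D⟩
      simp only [Finset.mem_filter, Finset.mem_univ, true_and, Finset.mem_insert,
        Finset.mem_singleton]
      simp only [SpInc]
      constructor
      · rintro ⟨h1, h2, ⟨h4, x, hx, h5⟩ | ⟨h4, j', hjC'', h5⟩⟩
        · subst h4 h5
          left
          by_contra hcon
          have hxx : x0 ≠ x := by rintro rfl; exact hcon rfl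
          have : j ∈ (σ.erase x).image c :=
            Finset.mem_image.2 ⟨x0, Finset.mem_erase.2 ⟨hxx, hx0⟩, hcx⟩
          rw [h2] at this
          exact hjC' this
        · subst h4 h5
          right
          have h6 : j ∈ (insert j' C).erase i0 := by
            rw [← h2, hB]; exact Finset.mem_insert_self _ _
          rw [(Finset.mem_insert.1 (Finset.mem_of_mem_erase h6)).resolve_right hjC]
      · rintro (h | h) <;> obtain ⟨rfl, rfl⟩ := Prod.mk.inj h
        · refine ⟨hi0, ?_, Or.inl ⟨rfl, x0, hx0, rfl⟩⟩
          ext i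
          constructor
          · intro hi
            obtain ⟨x, hx, rfl⟩ := Finset.mem_image.1 hi
            have h1 : c x ∈ insert j (D.erase i0) :=
              hB ▸ Finset.mem_image_of_mem _ (Finset.mem_of_mem_erase hx)
            refine (Finset.mem_insert.1 h1).resolve_left fun h2 => ?_
            exact (Finset.ne_of_mem_erase hx)
              (hinj (Finset.mem_of_mem_erase hx) hx0 (h2.trans hcx.symm))
          · intro hi
            obtain ⟨x, hx, rfl⟩ := Finset.mem_image.1 (hB ▸ Finset.mem_insert_of_mem hi)
            refine Finset.mem_image_of_mem _ (Finset.mem_erase.2 ⟨?_, hx⟩)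
            rintro rfl
            exact hjC' (hcx ▸ hi)
        · exact ⟨Finset.mem_insert_of_mem hi0, hB.trans hBi.symm, Or.inr ⟨rfl, j, hjC, rfl⟩⟩
    rw [this, Finset.card_pair hne]
    exact even_two
  · rw [Finset.filter_eq_empty_iff.2, Finset.card_empty]
    · exact Even.zero
    rintro ⟨τ, D⟩ - ⟨h1, h2, ⟨h4, x, hx, h5⟩ | ⟨h4, j, hj, h5⟩⟩
    · simp only at *
      subst h4 h5
      have hs : σ.image c = insert (c x) (D.erase i0) := by
        rw [← h2, ← Finset.image_insert, Finset.insert_erase hx]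
      by_cases hxD : c x ∈ D
      · by_cases hxi : c x = i0
        · rw [hxi, Finset.insert_erase hi0] at hs
          exact hnc hs
        · rw [Finset.insert_eq_of_mem (Finset.mem_erase.2 ⟨hxi, hxD⟩)] at hs
          exact hA hs
      · exact hB ⟨_, hxD, hs⟩
    · simp only at *
      subst h4 h5
      have hji : j ≠ i0 := by rintro rfl; exact hj hi0
      exact hB ⟨j, hj, h2.trans (Finset.erase_insert_of_ne hji)⟩

lemma sp_scarf {T I : Type*} [Fintype T] [Fintype I] [Nonempty T] [Nonempty I] (r : I → T → ℕ)
    (hr : ∀ i, Function.Injective (r i)) (c : T → I) :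
    ∃ (σ : Finset T) (C : Finset I), SpDom r σ C ∧ σ.image c = C := by
  by_contra hcon
  push Not at hcon
  obtain ⟨i0⟩ := ‹Nonempty I›
  have hsum := Finset.sum_card_bipartiteAbove_eq_sum_card_bipartiteBelow
    (s := Finset.univ.filter (fun R => SpRoom r R))
    (t := Finset.univ.filter (fun D => SpDoor r c i0 D)) (SpInc (T := T) (I := I))
  simp only [Finset.bipartiteAbove, Finset.bipartiteBelow, Finset.filter_filter] at hsum
  have h1 : Even (∑ R ∈ Finset.univ.filter (fun R => SpRoom r R),
      (Finset.univ.filter (fun D => SpDoor r c i0 D ∧ SpInc R D)).card) := by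
    apply Finset.even_sum
    intro R hR
    simp only [Finset.mem_filter, Finset.mem_univ, true_and] at hR
    exact sp_room_even r c i0 R hR (hcon _ _ hR.1)
  have hmem : ((∅, {i0}) : Finset T × Finset I) ∈ Finset.univ.filter (fun D => SpDoor r c i0 D) := by
    rw [Finset.mem_filter]
    exact ⟨Finset.mem_univ _, by simp [SpDoor, SpDom]⟩
  rw [hsum, ← Finset.add_sum_erase _ _ hmem, sp_door_one r hr i0] at h1
  have h2 : Even (∑ D ∈ (Finset.univ.filter (fun D => SpDoor r c i0 D)).erase (∅, {i0}),
      (Finset.univ.filter (fun R => SpRoom r R ∧ SpInc R D)).card) := by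
    apply Finset.even_sum
    rintro ⟨τ, D⟩ hD
    simp only [Finset.mem_erase, Finset.mem_filter, Finset.mem_univ, true_and] at hD
    obtain ⟨hne, hd, hcard, hi, him⟩ := hD
    simp only at hcard hi him hd
    rw [sp_door_two r hr τ D ?_ hd hcard]
    · exact even_two
    · rw [Finset.nonempty_iff_ne_empty]
      rintro rfl
      apply hne
      rw [Finset.card_empty, zero_add, Finset.card_eq_one] at hcard
      obtain ⟨a, rfl⟩ := hcard
      rw [Finset.mem_singleton] at hi
      rw [hi]
  rw [Nat.even_add] at h1
  exact absurd (h1.2 h2) (by decide)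

lemma sp_grid {N : Type*} [Fintype N] [Nonempty N] (k : ℕ) (c : (N → ℕ) → N) :
    ∃ (C : Finset N) (x : N → N → ℕ), (∀ i, ∑ l, x i l = k) ∧ (∀ i ∈ C, c (x i) = i) ∧
      (∀ i j l, x i l ≤ x j l + Fintype.card N) ∧ (∀ i, ∀ l, l ∉ C → x i l ≤ Fintype.card N) := by
  let F : Finset (N → ℕ) := Finset.piAntidiag Finset.univ k
  have hF : ∀ x : N → ℕ, x ∈ F ↔ ∑ l, x l = k := by
    intro x; simp [F]
  obtain ⟨i1⟩ := ‹Nonempty N›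
  have : Nonempty N := ⟨i1⟩
  have : Nonempty F := ⟨⟨fun l => if l = i1 then k else 0, (hF _).2 (by simp)⟩⟩
  let e := Fintype.equivFin F
  let M := Fintype.card F
  let r : N → F → ℕ := fun i x => x.1 i * M + (e x : ℕ)
  have hlt : ∀ i (x y : F), x.1 i < y.1 i → r i x < r i y := by
    intro i x y h
    have h1 : (e x : ℕ) < M := (e x).2
    have h2 : (x.1 i + 1) * M ≤ y.1 i * M := Nat.mul_le_mul_right _ h
    simp only [r]
    rw [add_mul] at h2
    omega
  have hr : ∀ i, Function.Injective (r i) := by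
    intro i x y h
    have h1 : x.1 i = y.1 i := by
      rcases lt_trichotomy (x.1 i) (y.1 i) with h' | h' | h'
      · exact absurd h (hlt i x y h').ne
      · exact h'
      · exact absurd h (hlt i y x h').ne'
    simp only [r, h1] at h
    exact e.injective (Fin.ext (by omega))
  obtain ⟨σ, C, hdom, him⟩ := sp_scarf r hr (fun x => c x.1)
  have hCne : C.Nonempty := by
    obtain ⟨i, hi, -⟩ := hdom (Classical.arbitrary F)
    exact ⟨i, hi⟩
  have hσ : σ.Nonempty := by
    rw [← him] at hCne
    exact Finset.image_nonempty.1 hCne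
  choose μ hμ hmin using fun i => Finset.exists_min_image σ (r i) hσ
  have hmin' : ∀ i, ∀ z ∈ σ, (μ i).1 i ≤ z.1 i := by
    intro i z hz
    by_contra h
    exact absurd (hmin i z hz) (not_le.2 (hlt i _ _ (not_le.1 h)))
  have hbig : k < ∑ l ∈ C, ((μ l).1 l + 1) := by
    by_contra h
    push Not at h
    obtain ⟨i2, hi2⟩ := hCne
    let y : N → ℕ := fun l => (if l ∈ C then (μ l).1 l + 1 else 0) +
      (if l = i2 then k - ∑ l ∈ C, ((μ l).1 l + 1) else 0)
    have hy : y ∈ F := by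
      rw [hF]
      simp only [y, Finset.sum_add_distrib, Finset.sum_ite_mem, Finset.univ_inter,
        Finset.sum_ite_eq', Finset.mem_univ, if_true]
      simp only [Finset.sum_add_distrib] at h ⊢
      omega
    obtain ⟨i, hi, hh⟩ := hdom ⟨y, hy⟩
    have h1 := hh _ (hμ i)
    refine absurd h1 (not_le.2 (hlt i _ _ ?_))
    simp only [y, hi, if_true]
    omega
  have hsumC : ∀ x ∈ σ, ∀ l, x.1 l + ∑ j ∈ C.erase l, x.1 j ≤ k := by
    intro x hx l
    rw [← (hF _).1 x.2, ← Finset.add_sum_erase Finset.univ _ (Finset.mem_univ l)]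
    exact Nat.add_le_add_left (Finset.sum_le_sum_of_subset
      (Finset.erase_subset_erase _ (Finset.subset_univ _))) _
  have hcardC : C.card ≤ Fintype.card N := Finset.card_le_univ C
  have hout : ∀ x ∈ σ, ∀ l, l ∉ C → x.1 l ≤ Fintype.card N := by
    intro x hx l hl
    have h1 := hsumC x hx l
    rw [Finset.erase_eq_of_notMem hl] at h1
    have h2 : ∑ j ∈ C, (μ j).1 j ≤ ∑ j ∈ C, x.1 j :=
      Finset.sum_le_sum fun j _ => hmin' j x hx
    rw [Finset.sum_add_distrib] at hbig
    simp only [Finset.sum_const, smul_eq_mul, mul_one] at hbig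
    omega
  have hin : ∀ x ∈ σ, ∀ l ∈ C, x.1 l ≤ (μ l).1 l + Fintype.card N := by
    intro x hx l hl
    have h1 := hsumC x hx l
    have h2 : ∑ j ∈ C.erase l, (μ j).1 j ≤ ∑ j ∈ C.erase l, x.1 j :=
      Finset.sum_le_sum fun j _ => hmin' j x hx
    rw [Finset.sum_add_distrib, ← Finset.add_sum_erase C _ hl] at hbig
    simp only [Finset.sum_const, smul_eq_mul, mul_one] at hbig
    omega
  have hX : ∀ i, ∃ x ∈ σ, i ∈ C → c x.1 = i := by
    intro i
    by_cases hi : i ∈ C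
    · rw [← him] at hi
      obtain ⟨x, hx, h⟩ := Finset.mem_image.1 hi
      exact ⟨x, hx, fun _ => h⟩
    · obtain ⟨x, hx⟩ := hσ
      exact ⟨x, hx, fun h => absurd h hi⟩
  choose X hXσ hXc using hX
  refine ⟨C, fun i => (X i).1, fun i => (hF _).1 (X i).2, hXc, fun i j l => ?_,
    fun i l hl => hout _ (hXσ i) l hl⟩
  by_cases hl : l ∈ C
  · exact (hin _ (hXσ i) l hl).trans (Nat.add_le_add_right (hmin' l _ (hXσ j)) _)
  · exact (hout _ (hXσ i) l hl).trans (Nat.le_add_left _ _)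

lemma sp_barycenter {N : Type*} [Fintype N] [Nonempty N] (ψ : (N → ℝ) → N → ℝ)
    (hψ : ContinuousOn ψ (stdSimplex ℝ N)) (hsum : ∀ x ∈ stdSimplex ℝ N, ∑ l, ψ x l = 1)
    (hface : ∀ x ∈ stdSimplex ℝ N, ∀ l, x l = 0 → ψ x l = 0) :
    ∃ x ∈ stdSimplex ℝ N, ∀ l, ψ x l = 1 / Fintype.card N := by
  have hn : (0 : ℝ) < Fintype.card N := by exact_mod_cast Fintype.card_pos
  let pt : ℕ → (N → ℕ) → N → ℝ := fun k x l => (x l : ℝ) / ((k : ℝ) + 1)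
  have hpt : ∀ k x, ∑ l, x l = k + 1 → pt k x ∈ stdSimplex ℝ N := by
    intro k x hx
    refine ⟨fun l => by simp only [pt]; positivity, ?_⟩
    simp only [pt]
    rw [← Finset.sum_div, div_eq_one_iff_eq (by positivity)]
    exact_mod_cast hx
  have hcol : ∀ k x, ∃ i, ∑ l, x l = k + 1 → ψ (pt k x) i ≤ 1 / Fintype.card N := by
    intro k x
    by_contra hcon
    push Not at hcon
    have hx := (hcon (Classical.arbitrary N)).1
    have : ∑ l : N, (1 / Fintype.card N : ℝ) < ∑ l, ψ (pt k x) l :=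
      Finset.sum_lt_sum_of_nonempty Finset.univ_nonempty fun i _ => (hcon i).2
    rw [hsum _ (hpt k x hx)] at this
    simp only [Finset.sum_const, Finset.card_univ, nsmul_eq_mul] at this
    rw [mul_one_div_cancel hn.ne'] at this
    exact lt_irrefl _ this
  choose c hc using hcol
  choose C X hXs hXc hXd hXo using fun k => sp_grid (k + 1) (c k)
  let U : Ultrafilter ℕ := Ultrafilter.of Filter.atTop
  have hU : (U : Filter ℕ) ≤ Filter.atTop := Ultrafilter.of_le _
  obtain ⟨C0, hC0⟩ : ∃ C0, ∀ᶠ k in (U : Filter ℕ), C k = C0 :=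
    Ultrafilter.eventually_exists_iff.1 (Filter.Eventually.of_forall fun k => ⟨C k, rfl⟩)
  let i1 : N := Classical.arbitrary N
  have hmemΔ : ∀ k i, pt k (X k i) ∈ stdSimplex ℝ N := fun k i => hpt k _ (hXs k i)
  obtain ⟨p, hp, hpU⟩ := (isCompact_stdSimplex ℝ N).ultrafilter_le_nhds'
    (U.map fun k => pt k (X k i1))
    (Filter.mem_map.2 (Filter.Eventually.of_forall fun k => hmemΔ k i1))
  have hlim1 : Filter.Tendsto (fun k => pt k (X k i1)) U (nhds p) := hpU
  have hsmall : Filter.Tendsto (fun k : ℕ => (Fintype.card N : ℝ) / ((k : ℝ) + 1)) U (nhds 0) := by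
    refine Filter.Tendsto.mono_left ?_ hU
    simpa [Function.comp_def] using (tendsto_const_div_atTop_nhds_zero_nat (Fintype.card N : ℝ)).comp
      (Filter.tendsto_add_atTop_nat 1)
  have hlim : ∀ i, Filter.Tendsto (fun k => pt k (X k i)) U (nhds p) := by
    intro i
    rw [tendsto_pi_nhds] at hlim1 ⊢
    intro l
    have hb : Filter.Tendsto (fun k => pt k (X k i) l - pt k (X k i1) l) U (nhds 0) := by
      refine squeeze_zero_norm (fun k => ?_) hsmall
      simp only [pt]
      rw [← sub_div, norm_div, Real.norm_eq_abs, Real.norm_eq_abs,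
        abs_of_pos (by positivity : (0 : ℝ) < (k : ℝ) + 1)]
      have h1 : (X k i l : ℝ) ≤ X k i1 l + Fintype.card N := by exact_mod_cast hXd k i i1 l
      have h2 : (X k i1 l : ℝ) ≤ X k i l + Fintype.card N := by exact_mod_cast hXd k i1 i l
      gcongr
      rw [abs_le]
      constructor <;> linarith
    simpa using hb.add (hlim1 l)
  have hle : ∀ i ∈ C0, ψ p i ≤ 1 / Fintype.card N := by
    intro i hi
    have h1 : Filter.Tendsto (fun k => pt k (X k i)) U (nhdsWithin p (stdSimplex ℝ N)) :=
      tendsto_nhdsWithin_iff.2 ⟨hlim i, Filter.Eventually.of_forall fun k => hmemΔ k i⟩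
    have h2 : Filter.Tendsto (fun k => ψ (pt k (X k i)) i) U (nhds (ψ p i)) :=
      (tendsto_pi_nhds.1 ((hψ p hp).tendsto.comp h1)) i
    refine le_of_tendsto h2 ?_
    filter_upwards [hC0] with k hk
    have := hc k (X k i) (hXs k i)
    rwa [hXc k i (hk ▸ hi)] at this
  have hzero : ∀ l, l ∉ C0 → p l = 0 := by
    intro l hl
    refine le_antisymm ?_ (hp.1 l)
    refine le_of_tendsto_of_tendsto (tendsto_pi_nhds.1 hlim1 l) hsmall ?_
    filter_upwards [hC0] with k hk
    simp only [pt]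
    gcongr
    exact_mod_cast hXo k i1 l (hk ▸ hl)
  have hle' : ∀ i, ψ p i ≤ 1 / Fintype.card N := by
    intro i
    by_cases hi : i ∈ C0
    · exact hle i hi
    · rw [hface p hp i (hzero i hi)]; positivity
  refine ⟨p, hp, fun l => ?_⟩
  have hs : ∑ l, ψ p l = ∑ _l : N, (1 / Fintype.card N : ℝ) := by
    rw [hsum p hp]
    simp only [Finset.sum_const, Finset.card_univ, nsmul_eq_mul]
    rw [mul_one_div_cancel hn.ne']
  exact (Finset.sum_eq_sum_iff_of_le fun i _ => hle' i).1 hs l (Finset.mem_univ l)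

/-- Meunier's multicolored Sperner lemma: if `f : K → PN` is a subdivision, `(c i)_{i ∈ I}`
are Sperner colorings of `f` and `m : I → ℕ` satisfies `∑ i, m i = |N| - 1`, then some
face `σ ∈ K` has `|c i σ| > m i` for every `i` and `⋃ i, c i σ = N`. -/
theorem multicolored_sperner {V N I : Type*} [Fintype V] [Fintype N] [Fintype I]
    [DecidableEq N] [Nonempty N] [Nonempty I]
    (K : Finset (Finset V)) (hK : IsComplex K)
    (f : Finset V → Finset N)
    (hf : IsSubdivision K (Finset.univ : Finset (Finset N)) f)
    (c : I → Finset V → Finset N)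
    (hc : ∀ i, IsSpernerColoring K (Finset.univ : Finset (Finset N)) f (c i))
    (m : I → ℕ) (hm : ∑ i, m i = Fintype.card N - 1) :
    ∃ σ ∈ K, (∀ i, m i < (c i σ).card) ∧
      Finset.univ.biUnion (fun i => c i σ) = (Finset.univ : Finset N) := by
  obtain ⟨-, h, hh⟩ := hf
  choose c₀ hc₀ using fun i => (hc i).1
  have hcf : ∀ i, ∀ A ∈ K, c i A ⊆ f A := fun i => (hc i).2.2
  have hreal : ∀ x, x ∈ stdSimplex ℝ N →
      x ∈ realization (Finset.univ : Finset (Finset N)) :=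
    fun x hx => ⟨hx.1, hx.2, Finset.mem_univ _⟩
  have hn : (0 : ℝ) < Fintype.card N := by exact_mod_cast Fintype.card_pos
  have hI : (0 : ℝ) < Fintype.card I := by exact_mod_cast Fintype.card_pos
  let w : I → ℝ := fun i => ((m i : ℝ) + 1 / Fintype.card I) / Fintype.card N
  have hw0 : ∀ i, 0 < w i := fun i => by simp only [w]; positivity
  have hw1 : ∑ i, w i = 1 := by
    simp only [w]
    rw [← Finset.sum_div, Finset.sum_add_distrib]
    simp only [Finset.sum_const, Finset.card_univ, nsmul_eq_mul]
    rw [mul_one_div_cancel hI.ne', div_eq_one_iff_eq hn.ne', ← Nat.cast_sum, hm]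
    have : 1 ≤ Fintype.card N := Fintype.card_pos
    push_cast [Nat.cast_sub this]
    ring
  let G : I → (V → ℝ) → N → ℝ := fun i k j => ∑ v, if c₀ i v = j then k v else 0
  have hG1 : ∀ i k, ∑ j, G i k j = ∑ v, k v := by
    intro i k
    simp only [G]
    rw [Finset.sum_comm]
    simp
  have hG0 : ∀ i (k : realization K) j, 0 ≤ G i k j := by
    intro i k j
    refine Finset.sum_nonneg fun v _ => ?_
    split_ifs
    · exact k.2.1 v
    · exact le_rfl
  have hGmem : ∀ i (k : realization K) j, G i k j ≠ 0 → j ∈ c i (spt k.1) := by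
    intro i k j hne
    obtain ⟨v, -, hv⟩ := Finset.exists_ne_zero_of_sum_ne_zero hne
    rw [hc₀]
    split_ifs at hv with hvj
    · refine Finset.mem_image.2 ⟨v, ?_, hvj⟩
      simp only [spt, Finset.mem_filter, Finset.mem_univ, true_and]
      exact lt_of_le_of_ne (k.2.1 v) hv.symm
    · exact absurd rfl hv
  let ψ : (N → ℝ) → N → ℝ := fun x j =>
    if hx : x ∈ stdSimplex ℝ N then ∑ i, w i * G i (h.symm ⟨x, hreal x hx⟩).1 j else 0
  have hψ : ∀ x (hx : x ∈ stdSimplex ℝ N) j,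
      ψ x j = ∑ i, w i * G i (h.symm ⟨x, hreal x hx⟩).1 j := by
    intro x hx j
    simp only [ψ, dif_pos hx]
  have hP1 : ContinuousOn ψ (stdSimplex ℝ N) := by
    rw [continuousOn_iff_continuous_domRestrict]
    have hcont : Continuous (fun x : stdSimplex ℝ N => (h.symm ⟨x.1, hreal x.1 x.2⟩).1) :=
      continuous_subtype_val.comp (h.symm.continuous.comp
        (Continuous.subtype_mk continuous_subtype_val _))
    have heq : (stdSimplex ℝ N).domRestrict ψ =
        fun x j => ∑ i, w i * G i (h.symm ⟨x.1, hreal x.1 x.2⟩).1 j := by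
      funext x j
      exact hψ x.1 x.2 j
    rw [heq]
    refine continuous_pi fun j => continuous_finset_sum _ fun i _ => continuous_const.mul ?_
    refine continuous_finset_sum _ fun v _ => ?_
    split_ifs
    · exact (continuous_apply v).comp hcont
    · exact continuous_const
  have hP2 : ∀ x ∈ stdSimplex ℝ N, ∑ l, ψ x l = 1 := by
    intro x hx
    simp only [hψ x hx]
    rw [Finset.sum_comm]
    simp only [← Finset.mul_sum, hG1, (h.symm ⟨x, hreal x hx⟩).2.2.1, mul_one]
    exact hw1
  have hP3 : ∀ x ∈ stdSimplex ℝ N, ∀ l, x l = 0 → ψ x l = 0 := by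
    intro x hx l hl
    rw [hψ x hx]
    refine Finset.sum_eq_zero fun i _ => ?_
    by_contra hne
    have h1 := hcf i _ (h.symm ⟨x, hreal x hx⟩).2.2.2
      (hGmem i (h.symm ⟨x, hreal x hx⟩) l (right_ne_zero_of_mul hne))
    rw [← hh, h.apply_symm_apply] at h1
    simp only [spt, Finset.mem_filter, Finset.mem_univ, true_and] at h1
    exact h1.ne' hl
  obtain ⟨x, hx, hbary⟩ := sp_barycenter ψ hP1 hP2 hP3
  let k := h.symm ⟨x, hreal x hx⟩
  have hk : ∀ j, ∑ i, w i * G i k.1 j = 1 / Fintype.card N := fun j => by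
    rw [← hbary j, hψ x hx j]
  refine ⟨spt k.1, k.2.2.2, fun i => ?_, ?_⟩
  · have h1 : w i = ∑ j ∈ c i (spt k.1), w i * G i k.1 j := by
      rw [Finset.sum_subset (Finset.subset_univ _), ← Finset.mul_sum, hG1, k.2.2.1, mul_one]
      intro j _ hj
      by_contra hne
      exact hj (hGmem i k j (right_ne_zero_of_mul hne))
    have h2 : w i ≤ ∑ j ∈ c i (spt k.1), (1 / Fintype.card N : ℝ) := by
      rw [h1]
      refine Finset.sum_le_sum fun j _ => ?_
      rw [← hk j]
      exact Finset.single_le_sum (f := fun i => w i * G i k.1 j)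
        (fun i _ => mul_nonneg (hw0 i).le (hG0 i k j)) (Finset.mem_univ i)
    simp only [Finset.sum_const, nsmul_eq_mul, mul_one_div, w] at h2
    rw [div_le_div_iff_of_pos_right hn] at h2
    have h3 : (0 : ℝ) < 1 / Fintype.card I := by positivity
    have h4 : (m i : ℝ) < ((c i (spt k.1)).card : ℝ) := by linarith
    exact_mod_cast h4
  · rw [Finset.eq_univ_iff_forall]
    intro j
    have hne : ∑ i, w i * G i k.1 j ≠ 0 := by
      rw [hk j]; positivity
    obtain ⟨i, -, hi⟩ := Finset.exists_ne_zero_of_sum_ne_zero hne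
    exact Finset.mem_biUnion.2 ⟨i, Finset.mem_univ _, hGmem i k j (right_ne_zero_of_mul hi)⟩
end

section
/- Let N be a nonempty finite set, (K,V) a finite simplicial complex, f : K → PN a subdivision, and c a Sperner coloring of f. Then there exists a face σ ∈ K with c(σ) = N (a face using all colors); this is Sperner's lemma, the case |I| = 1 of the main theorem. -/
open scoped Classical

def SDom {I R α : Type*} [LinearOrder α] (u : I → R → α) (σ : Finset R) : Prop :=
  ∀ y, ∃ i, ∀ x ∈ σ, u i y ≤ u i x

lemma sdom_mono {I R α : Type*} [LinearOrder α] {u : I → R → α} {σ τ : Finset R}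
    (h : τ ⊆ σ) (hd : SDom u σ) : SDom u τ := fun y => by
  obtain ⟨i, hi⟩ := hd y
  exact ⟨i, fun x hx => hi x (h hx)⟩

lemma exists_minmap {I R α : Type*} [LinearOrder α] (u : I → R → α) {τ : Finset R}
    (hne : τ.Nonempty) : ∃ m : I → R, (∀ i, m i ∈ τ) ∧ ∀ i, ∀ x ∈ τ, u i (m i) ≤ u i x := by
  have : ∀ i, ∃ a ∈ τ, ∀ x ∈ τ, u i a ≤ u i x := fun i => Finset.exists_min_image τ (u i) hne
  choose m h1 h2 using this
  exact ⟨m, h1, h2⟩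

lemma door_surj {I R α : Type*} [LinearOrder α] {u : I → R → α}
    (hu : ∀ i, Function.Injective (u i)) {τ : Finset R} (hd : SDom u τ) {m : I → R}
    (hm : ∀ i, m i ∈ τ) (hmin : ∀ i, ∀ x ∈ τ, u i (m i) ≤ u i x) :
    ∀ x ∈ τ, ∃ i, m i = x := by
  intro x hx
  obtain ⟨i, hi⟩ := hd x
  exact ⟨i, hu i (le_antisymm (hmin i x hx) (hi _ (hm i)))⟩

lemma door_pair {I R : Type*} [Fintype I] {τ : Finset R} {m : I → R}
    (hcard : τ.card + 1 = Fintype.card I)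
    (hm : ∀ i, m i ∈ τ) (hs : ∀ x ∈ τ, ∃ i, m i = x) :
    ∃ p q, p ≠ q ∧ m p = m q ∧
      ∀ a b, m a = m b → a = b ∨ (a = p ∧ b = q) ∨ (a = q ∧ b = p) := by
  obtain ⟨p, -, q, -, hpq, he⟩ := Finset.exists_ne_map_eq_of_card_lt_of_maps_to
    (s := (Finset.univ : Finset I)) (t := τ) (f := m)
    (by rw [Finset.card_univ]; omega) (fun i _ => hm i)
  have key : ∀ p q, p ≠ q → m p = m q →
      Set.InjOn m ((Finset.univ.erase p : Finset I) : Set I) := by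
    intro p q hpq he
    apply Finset.injOn_of_surjOn_of_card_le (t := τ) m
    · intro i _; exact hm i
    · intro x hx
      obtain ⟨i, hi⟩ := hs x hx
      by_cases h : i = p
      · exact ⟨q, by simp [hpq.symm], by rw [← he, ← h, hi]⟩
      · exact ⟨i, by simp [h], hi⟩
    · rw [Finset.card_erase_of_mem (Finset.mem_univ _), Finset.card_univ]; omega
  refine ⟨p, q, hpq, he, fun a b hab => ?_⟩
  have h1 := key p q hpq he
  have h2 := key q p hpq.symm he.symm
  by_contra hcon
  push Not at hcon
  obtain ⟨hne, h3, h4⟩ := hcon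
  have e1 : a = p ∨ b = p := by
    by_contra hh; push Not at hh
    exact hne (h1 (by simp [hh.1]) (by simp [hh.2]) hab)
  have e2 : a = q ∨ b = q := by
    by_contra hh; push Not at hh
    exact hne (h2 (by simp [hh.1]) (by simp [hh.2]) hab)
  grind

/-- candidates for replacing index `k` -/
def SM {I R α : Type*} [LinearOrder α] (u : I → R → α) (m : I → R) (k : I) (y : R) : Prop :=
  ∀ l, l ≠ k → u l (m l) < u l y

def SMax {I R α : Type*} [LinearOrder α] (u : I → R → α) (m : I → R) (k : I) (x : R) : Prop :=
  SM u m k x ∧ ∀ y, SM u m k y → u k y ≤ u k x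

lemma smax_le {I R α : Type*} [LinearOrder α] {u : I → R → α}
    {τ : Finset R} (hd : SDom u τ) {m : I → R}
    (hm : ∀ i, m i ∈ τ) {k : I} {x : R} (hx : SM u m k x) :
    ∀ z ∈ τ, u k x ≤ u k z := by
  obtain ⟨i, hi⟩ := hd x
  by_cases h : i = k
  · rw [← h]; exact hi
  · exact absurd (hi _ (hm i)) (not_le.2 (hx i h))

lemma door_bwd {I R α : Type*} [LinearOrder α] {u : I → R → α}
    {τ : Finset R} (hd : SDom u τ) {m : I → R}
    (hm : ∀ i, m i ∈ τ) (hmin : ∀ i, ∀ x ∈ τ, u i (m i) ≤ u i x)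
    (hs : ∀ x ∈ τ, ∃ i, m i = x) {k k' : I} (hkk : k ≠ k') (he : m k = m k') {x : R}
    (hx : SMax u m k x) : x ∉ τ ∧ SDom u (insert x τ) := by
  obtain ⟨h1, h2⟩ := hx
  have h3 := smax_le hd hm h1
  refine ⟨fun hxt => ?_, fun y => ?_⟩
  · obtain ⟨i, hi⟩ := hs x hxt
    by_cases h : i = k
    · have := h1 k' hkk.symm
      rw [← he, ← h, hi] at this
      exact lt_irrefl _ this
    · have := h1 i h
      rw [hi] at this
      exact lt_irrefl _ this
  · by_cases hy : SM u m k y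
    · refine ⟨k, fun z hz => ?_⟩
      rcases Finset.mem_insert.1 hz with rfl | hz
      · exact h2 y hy
      · exact (h2 y hy).trans (h3 z hz)
    · unfold SM at hy
      push Not at hy
      obtain ⟨l, hl, hle⟩ := hy
      refine ⟨l, fun z hz => ?_⟩
      rcases Finset.mem_insert.1 hz with rfl | hz
      · exact hle.trans (h1 l hl).le
      · exact hle.trans (hmin l z hz)

lemma door_fwd {I R α : Type*} [LinearOrder α] {u : I → R → α}
    (hu : ∀ i, Function.Injective (u i)) {τ : Finset R} {m : I → R}
    (hm : ∀ i, m i ∈ τ) (hmin : ∀ i, ∀ x ∈ τ, u i (m i) ≤ u i x)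
    {p q : I} (huniq : ∀ a b, m a = m b → a = b ∨ (a = p ∧ b = q) ∨ (a = q ∧ b = p))
    {x : R} (hxt : x ∉ τ) (hD : SDom u (insert x τ)) : SMax u m p x ∨ SMax u m q x := by
  have hB : ∀ k, u k x < u k (m k) → ∃ i, ¬ (u i x < u i (m i)) ∧ m i = m k := by
    intro k hk
    obtain ⟨i, hi⟩ := hD (m k)
    have e : m i = m k := hu i (le_antisymm (hmin i _ (hm k)) (hi _ (Finset.mem_insert_of_mem (hm i))))
    exact ⟨i, by rw [e]; exact not_lt.2 (hi _ (Finset.mem_insert_self _ _)), e⟩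
  have hne : ∀ i, u i x ≠ u i (m i) := fun i h => hxt (by rw [hu i h]; exact hm i)
  obtain ⟨k, hk⟩ := hD x
  have hkB : u k x < u k (m k) :=
    lt_of_le_of_ne (hk _ (Finset.mem_insert_of_mem (hm k))) (hne k)
  have hM : SM u m k x := by
    intro l hl
    by_contra hcon
    have hlB : u l x < u l (m l) := lt_of_le_of_ne (not_lt.1 hcon) (hne l)
    obtain ⟨i, hi1, hi2⟩ := hB k hkB
    obtain ⟨j, hj1, hj2⟩ := hB l hlB
    have a1 := huniq _ _ hi2
    have a2 := huniq _ _ hj2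
    have b1 : i ≠ k := fun h => hi1 (h ▸ hkB)
    have b2 : j ≠ l := fun h => hj1 (h ▸ hlB)
    have b3 : i ≠ l := fun h => hi1 (h ▸ hlB)
    grind
  have hX : SMax u m k x := by
    refine ⟨hM, fun y hy => ?_⟩
    obtain ⟨i, hi⟩ := hD y
    by_cases h : i = k
    · rw [← h]; exact hi x (Finset.mem_insert_self _ _)
    · exact absurd (hi _ (Finset.mem_insert_of_mem (hm i))) (not_le.2 (hy i h))
  obtain ⟨i, hi1, hi2⟩ := hB k hkB
  have b1 : i ≠ k := fun h => hi1 (h ▸ hkB)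
  rcases huniq _ _ hi2 with h | ⟨-, h⟩ | ⟨-, h⟩
  · exact absurd h b1
  · right; rw [← h]; exact hX
  · left; rw [← h]; exact hX

lemma exists_smax {I R α : Type*} [Fintype R] [LinearOrder α] {u : I → R → α} {m : I → R} {k : I}
    (h : ∃ y, SM u m k y) : ∃ x, SMax u m k x := by
  obtain ⟨y, hy⟩ := h
  obtain ⟨x, hx, hmax⟩ := Finset.exists_max_image (Finset.univ.filter (SM u m k)) (u k)
    ⟨y, by simpa using hy⟩
  exact ⟨x, by simpa using hx, fun z hz => hmax z (by simpa using hz)⟩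

lemma smax_unique {I R α : Type*} [LinearOrder α] {u : I → R → α}
    (hu : ∀ i, Function.Injective (u i)) {m : I → R} {k : I} {x y : R}
    (hx : SMax u m k x) (hy : SMax u m k y) : x = y :=
  hu k (le_antisymm (hy.2 _ hx.1) (hx.2 _ hy.1))

/-- cells above a door -/
noncomputable def above {I R α : Type*} [Fintype I] [Fintype R] [LinearOrder α] (u : I → R → α)
    (τ : Finset R) : Finset (Finset R) :=
  Finset.univ.filter (fun σ => (σ.card = Fintype.card I ∧ SDom u σ) ∧ τ ⊆ σ)

lemma above_eq {I R α : Type*} [Fintype I] [Fintype R] [LinearOrder α] (u : I → R → α)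
    {τ : Finset R} (hcard : τ.card + 1 = Fintype.card I) :
    above u τ = (Finset.univ.filter (fun x => x ∉ τ ∧ SDom u (insert x τ))).image
      (fun x => insert x τ) := by
  ext σ
  simp only [above, Finset.mem_filter, Finset.mem_univ, true_and, Finset.mem_image]
  constructor
  · rintro ⟨⟨h1, h2⟩, h3⟩
    have : (σ \ τ).card = 1 := by rw [Finset.card_sdiff_of_subset h3]; omega
    obtain ⟨x, hx⟩ := Finset.card_eq_one.1 this
    have hx' : x ∈ σ \ τ := by rw [hx]; simp
    have e : insert x τ = σ := by
      rw [Finset.insert_eq, ← hx, Finset.sdiff_union_of_subset h3]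
    refine ⟨x, ⟨(Finset.mem_sdiff.1 hx').2, e ▸ h2⟩, e⟩
  · rintro ⟨x, ⟨h1, h2⟩, rfl⟩
    exact ⟨⟨by rw [Finset.card_insert_of_notMem h1, hcard], h2⟩, Finset.subset_insert _ _⟩

lemma above_card {I R α : Type*} [Fintype I] [Fintype R] [LinearOrder α] (u : I → R → α)
    {τ : Finset R} (hcard : τ.card + 1 = Fintype.card I) :
    (above u τ).card = (Finset.univ.filter (fun x => x ∉ τ ∧ SDom u (insert x τ))).card := by
  rw [above_eq u hcard, Finset.card_image_of_injOn]
  intro x hx y hy hxy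
  simp only [Finset.coe_filter, Finset.mem_univ, true_and, Set.mem_ofPred_eq] at hx hy hxy
  have : x ∈ insert y τ := by rw [← hxy]; simp
  rcases Finset.mem_insert.1 this with h | h
  · exact h
  · exact absurd h hx.1

lemma above_two {I R α : Type*} [Fintype I] [Fintype R] [LinearOrder α] {u : I → R → α}
    (hu : ∀ i, Function.Injective (u i)) {τ : Finset R} (hcard : τ.card + 1 = Fintype.card I)
    (hd : SDom u τ) {m : I → R}
    (hm : ∀ i, m i ∈ τ) (hmin : ∀ i, ∀ x ∈ τ, u i (m i) ≤ u i x)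
    (hM : ∀ k, ∃ y, SM u m k y) : (above u τ).card = 2 := by
  have hs := door_surj hu hd hm hmin
  obtain ⟨p, q, hpq, he, huniq⟩ := door_pair hcard hm hs
  obtain ⟨x, hx⟩ := exists_smax (hM p)
  obtain ⟨y, hy⟩ := exists_smax (hM q)
  rw [above_card u hcard]
  rw [Finset.card_eq_two]
  refine ⟨x, y, ?_, ?_⟩
  · rintro rfl
    have := smax_le hd hm hy.1 _ (hm q)
    exact absurd this (not_le.2 (hx.1 q hpq.symm))
  · ext z
    simp only [Finset.mem_filter, Finset.mem_univ, true_and, Finset.mem_insert,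
      Finset.mem_singleton]
    constructor
    · rintro ⟨h1, h2⟩
      rcases door_fwd hu hm hmin huniq h1 h2 with h | h
      · exact Or.inl (smax_unique hu h hx)
      · exact Or.inr (smax_unique hu h hy)
    · rintro (rfl | rfl)
      · exact door_bwd hd hm hmin hs hpq he hx
      · exact door_bwd hd hm hmin hs hpq.symm he.symm hy

lemma above_one {I R α : Type*} [Fintype I] [Fintype R] [LinearOrder α] {u : I → R → α}
    (hu : ∀ i, Function.Injective (u i)) {τ : Finset R} (hcard : τ.card + 1 = Fintype.card I)
    (hd : SDom u τ) {m : I → R}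
    (hm : ∀ i, m i ∈ τ) (hmin : ∀ i, ∀ x ∈ τ, u i (m i) ≤ u i x)
    {p q : I} (hpq : p ≠ q) (he : m p = m q)
    (hMp : ∃ y, SM u m p y) (hMq : ¬ ∃ y, SM u m q y) : (above u τ).card = 1 := by
  have hs := door_surj hu hd hm hmin
  obtain ⟨p', q', hpq', he', huniq⟩ := door_pair hcard hm hs
  obtain ⟨x, hx⟩ := exists_smax hMp
  rw [above_card u hcard]
  rw [Finset.card_eq_one]
  refine ⟨x, ?_⟩
  ext z
  simp only [Finset.mem_filter, Finset.mem_univ, true_and, Finset.mem_singleton]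
  constructor
  · rintro ⟨h1, h2⟩
    have h3 : SMax u m p z ∨ SMax u m q z := by
      have h4 := door_fwd hu hm hmin huniq h1 h2
      rcases huniq p q he with h | ⟨rfl, rfl⟩ | ⟨rfl, rfl⟩
      · exact absurd h hpq
      · exact h4
      · exact h4.symm
    rcases h3 with h | h
    · exact smax_unique hu h hx
    · exact absurd ⟨z, h.1⟩ hMq
  · rintro rfl
    exact door_bwd hd hm hmin hs hpq he hx

lemma below_even {I R : Type*} [Fintype I] [Fintype R] (c : R → I) (i₀ : I) (P : Finset R → Prop)
    (hP : ∀ σ τ, τ ⊆ σ → P σ → P τ)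
    {σ : Finset R} (hcard : σ.card = Fintype.card I) (hPσ : P σ)
    (hc : σ.image c ≠ Finset.univ) :
    Even (Finset.univ.filter (fun τ : Finset R =>
      (τ.card + 1 = Fintype.card I ∧ P τ ∧ τ.image c = Finset.univ.erase i₀) ∧ τ ⊆ σ)).card := by
  set D := Finset.univ.filter (fun τ : Finset R =>
      (τ.card + 1 = Fintype.card I ∧ P τ ∧ τ.image c = Finset.univ.erase i₀) ∧ τ ⊆ σ) with hD
  rcases D.eq_empty_or_nonempty with h | ⟨τ, hτ⟩
  · rw [h]; simp
  have hform : ∀ τ ∈ D, ∃ x ∈ σ, τ = σ.erase x := by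
    intro τ hτ
    simp only [hD, Finset.mem_filter, Finset.mem_univ, true_and] at hτ
    obtain ⟨⟨h1, h2, h3⟩, h4⟩ := hτ
    have : (σ \ τ).card = 1 := by rw [Finset.card_sdiff_of_subset h4]; omega
    obtain ⟨x, hx⟩ := Finset.card_eq_one.1 this
    have hx' : x ∈ σ \ τ := by rw [hx]; simp
    refine ⟨x, (Finset.mem_sdiff.1 hx').1, ?_⟩
    rw [Finset.erase_eq, ← hx, Finset.sdiff_sdiff_eq_self h4]
  obtain ⟨x, hxσ, rfl⟩ := hform τ hτ
  have hτ0 := hτ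
  simp only [hD, Finset.mem_filter, Finset.mem_univ, true_and] at hτ
  obtain ⟨⟨h1, h2, h3⟩, h4⟩ := hτ
  have hinj : Set.InjOn c ((σ.erase x : Finset R) : Set R) := by
    rw [← Finset.card_image_iff, h3, Finset.card_erase_of_mem (Finset.mem_univ _),
      Finset.card_univ]; omega
  have hcx : c x ≠ i₀ := by
    intro h
    apply hc
    rw [← Finset.insert_erase hxσ, Finset.image_insert, h3, h]
    simp
  have : c x ∈ (σ.erase x).image c := by rw [h3]; simp [hcx]
  obtain ⟨x', hx', hcx'⟩ := Finset.mem_image.1 this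
  obtain ⟨hne, hx'σ⟩ := Finset.mem_erase.1 hx'
  have himg : (σ.erase x').image c = Finset.univ.erase i₀ := by
    rw [← h3]
    ext i
    simp only [Finset.mem_image, Finset.mem_erase]
    constructor
    · rintro ⟨a, ⟨ha, has⟩, rfl⟩
      by_cases hax : a = x
      · exact ⟨x', ⟨hne, hx'σ⟩, by rw [hcx', hax]⟩
      · exact ⟨a, ⟨hax, has⟩, rfl⟩
    · rintro ⟨a, ⟨ha, has⟩, rfl⟩
      by_cases hax : a = x'
      · exact ⟨x, ⟨hne.symm, hxσ⟩, by rw [hax, hcx']⟩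
      · exact ⟨a, ⟨hax, has⟩, rfl⟩
  have hDe : D = {σ.erase x, σ.erase x'} := by
    ext τ
    simp only [Finset.mem_insert, Finset.mem_singleton]
    constructor
    · intro hτ
      obtain ⟨z, hz, rfl⟩ := hform τ hτ
      by_contra hcon
      push Not at hcon
      have hzx : z ≠ x := fun h => hcon.1 (by rw [h])
      have hzx' : z ≠ x' := fun h => hcon.2 (by rw [h])
      simp only [hD, Finset.mem_filter, Finset.mem_univ, true_and] at hτ
      have hzm : z ∈ σ.erase x := Finset.mem_erase.2 ⟨hzx, hz⟩
      have : c z ∈ (σ.erase z).image c := by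
        rw [hτ.1.2.2, ← h3]; exact Finset.mem_image_of_mem _ hzm
      obtain ⟨w, hw, hcw⟩ := Finset.mem_image.1 this
      obtain ⟨hwz, hwσ⟩ := Finset.mem_erase.1 hw
      by_cases hwx : w = x
      · subst hwx
        exact hzx' (hinj hzm hx' (by rw [hcx', hcw]))
      · exact hwz (hinj (Finset.mem_coe.2 (Finset.mem_erase.2 ⟨hwx, hwσ⟩)) hzm hcw)
    · rintro (rfl | rfl)
      · exact hτ0
      · simp only [hD, Finset.mem_filter, Finset.mem_univ, true_and]
        refine ⟨⟨?_, hP _ _ (Finset.erase_subset _ _) hPσ, himg⟩, Finset.erase_subset _ _⟩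
        rw [Finset.card_erase_add_one hx'σ, hcard]
  rw [hDe, Finset.card_pair]
  · exact even_two
  · intro h
    have : x' ∈ σ.erase x' := h ▸ hx'
    simp at this

theorem scarf {I R α : Type*} [Fintype I] [Fintype R] [LinearOrder α] {u : I → R → α}
    (hu : ∀ i, Function.Injective (u i)) (hI : 2 ≤ Fintype.card I)
    (s : I → R) (hs1 : ∀ i y, u i (s i) ≤ u i y)
    (hs2 : ∀ y, y ∉ Set.range s → ∀ i j, i ≠ j → u i y < u i (s j))
    (c : R → I) (hcs : ∀ i, c (s i) = i) :
    ∃ σ : Finset R, SDom u σ ∧ σ.image c = Finset.univ := by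
  by_contra hcon
  push Not at hcon
  have hsinj : Function.Injective s := fun a b h => by rw [← hcs a, h, hcs]
  obtain ⟨i₀⟩ : Nonempty I := Fintype.card_pos_iff.1 (by omega)
  set D := Finset.univ.filter (fun τ : Finset R =>
      τ.card + 1 = Fintype.card I ∧ SDom u τ ∧ τ.image c = Finset.univ.erase i₀) with hD
  set S := Finset.univ.filter (fun σ : Finset R => σ.card = Fintype.card I ∧ SDom u σ) with hS
  have hdc := Finset.sum_card_bipartiteAbove_eq_sum_card_bipartiteBelow
    (s := D) (t := S) (fun τ σ => τ ⊆ σ)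
  have heven : Even (∑ σ ∈ S, (D.bipartiteBelow (fun τ σ => τ ⊆ σ) σ).card) := by
    apply Finset.even_sum
    intro σ hσ
    simp only [hS, Finset.mem_filter, Finset.mem_univ, true_and] at hσ
    have := below_even c i₀ (SDom u) (fun _ _ => sdom_mono) hσ.1 hσ.2 (hcon σ hσ.2)
    have e : D.bipartiteBelow (fun τ σ => τ ⊆ σ) σ = Finset.univ.filter (fun τ : Finset R =>
      (τ.card + 1 = Fintype.card I ∧ SDom u τ ∧ τ.image c = Finset.univ.erase i₀) ∧ τ ⊆ σ) := by
      ext τ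
      simp [Finset.bipartiteBelow, hD]
    rw [e]; exact this
  have hab : ∀ τ, S.bipartiteAbove (fun τ σ => τ ⊆ σ) τ = above u τ := by
    intro τ
    ext σ
    simp [Finset.bipartiteAbove, above, hS]
  rw [← hdc] at heven
  simp only [hab] at heven
  set τ₀ : Finset R := (Finset.univ.erase i₀).image s with hτ₀
  have hτ₀c : τ₀.card + 1 = Fintype.card I := by
    rw [hτ₀, Finset.card_image_of_injective _ hsinj, Finset.card_erase_add_one (Finset.mem_univ _),
      Finset.card_univ]
  have hτ₀d : SDom u τ₀ := by
    intro y
    by_cases hy : y ∈ Set.range s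
    · obtain ⟨a, rfl⟩ := hy
      exact ⟨a, fun x _ => hs1 a x⟩
    · refine ⟨i₀, fun x hx => ?_⟩
      obtain ⟨a, ha, rfl⟩ := Finset.mem_image.1 hx
      exact (hs2 y hy i₀ a (Finset.mem_erase.1 ha).1.symm).le
  have hτ₀D : τ₀ ∈ D := by
    simp only [hD, Finset.mem_filter, Finset.mem_univ, true_and]
    refine ⟨hτ₀c, hτ₀d, ?_⟩
    rw [hτ₀, Finset.image_image]
    have : c ∘ s = id := funext hcs
    rw [this, Finset.image_id]
  have hone : (above u τ₀).card = 1 := by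
    have hne : τ₀.Nonempty := by rw [← Finset.card_pos]; omega
    obtain ⟨m, hm, hmin⟩ := exists_minmap u hne
    have hml : ∀ l, l ≠ i₀ → m l = s l := by
      intro l hl
      exact hu l (le_antisymm (hmin l _ (Finset.mem_image_of_mem _ (by simp [hl]))) (hs1 l _))
    obtain ⟨j, hj, hmj⟩ := Finset.mem_image.1 (hm i₀)
    have hj' : j ≠ i₀ := (Finset.mem_erase.1 hj).1
    refine above_one hu hτ₀c hτ₀d hm hmin (p := i₀) (q := j) hj'.symm (by rw [hml j hj', hmj])
      ⟨s i₀, fun l hl => ?_⟩ ?_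
    · rw [hml l hl]
      exact lt_of_le_of_ne (hs1 l _) (fun h => hl (hsinj (hu l h)))
    · rintro ⟨y, hy⟩
      have hy0 := hy i₀ hj'.symm
      rw [← hmj] at hy0
      by_cases hr : y ∈ Set.range s
      · obtain ⟨a, rfl⟩ := hr
        by_cases ha : a = i₀
        · rw [ha] at hy0; exact absurd (hs1 i₀ (s j)) (not_le.2 hy0)
        · by_cases haj : a = j
          · rw [haj] at hy0; exact lt_irrefl _ hy0
          · have := hy a haj
            rw [hml a ha] at this
            exact lt_irrefl _ this
      · exact lt_asymm hy0 (hs2 y hr i₀ j hj'.symm)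
  have htwo : ∀ τ ∈ D.erase τ₀, Even (above u τ).card := by
    intro τ hτ
    obtain ⟨hne0, hτD⟩ := Finset.mem_erase.1 hτ
    simp only [hD, Finset.mem_filter, Finset.mem_univ, true_and] at hτD
    obtain ⟨h1, h2, h3⟩ := hτD
    have ht : ∃ t ∈ τ, t ∉ Set.range s := by
      by_contra hh
      push Not at hh
      apply hne0
      apply Finset.eq_of_subset_of_card_le
      · intro x hx
        obtain ⟨a, rfl⟩ := hh x hx
        apply Finset.mem_image_of_mem
        rw [← h3]
        exact Finset.mem_image.2 ⟨s a, hx, hcs a⟩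
      · omega
    obtain ⟨t, htτ, htr⟩ := ht
    obtain ⟨m, hm, hmin⟩ := exists_minmap u ⟨t, htτ⟩
    rw [above_two hu h1 h2 hm hmin]
    · exact even_two
    · intro k
      exact ⟨s k, fun l hl => (hmin l t htτ).trans_lt (hs2 t htr l k hl)⟩
  rw [← Finset.add_sum_erase _ _ hτ₀D, hone] at heven
  have := Finset.even_sum _ htwo
  rw [Nat.even_add] at heven
  exact absurd (heven.2 this) (by decide)

abbrev Grid (I : Type*) [Fintype I] (m : ℕ) := {x : I → Fin (m + 1) // ∑ i, (x i : ℕ) = m}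

lemma exists_grid {I : Type*} [Fintype I] [Nonempty I] (m : ℕ) (b : I → ℕ) (hb : ∑ i, b i ≤ m) :
    ∃ y : Grid I m, ∀ i, b i ≤ (y.1 i : ℕ) := by
  obtain ⟨i₁⟩ := ‹Nonempty I›
  let z : I → ℕ := fun i => b i + if i = i₁ then m - ∑ i, b i else 0
  have hz : ∑ i, z i = m := by
    simp only [z, Finset.sum_add_distrib, Finset.sum_ite_eq', Finset.mem_univ, if_true]
    omega
  have hzm : ∀ i, z i < m + 1 := fun i => by
    have := Finset.single_le_sum (f := z) (fun _ _ => Nat.zero_le _) (Finset.mem_univ i)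
    omega
  exact ⟨⟨fun i => ⟨z i, hzm i⟩, hz⟩, fun i => Nat.le_add_right _ _⟩

theorem grid_sperner {I : Type*} [Fintype I] (hI : 2 ≤ Fintype.card I) (m : ℕ)
    (lab : Grid I m → I) : ∃ x₀ : Grid I m, ∀ i, (x₀.1 i : ℕ) ≤ Fintype.card I ∨
      ∃ y : Grid I m, lab y = i ∧ ∀ j, (y.1 j : ℕ) ≤ x₀.1 j + Fintype.card I ∧
        (x₀.1 j : ℕ) ≤ y.1 j + Fintype.card I := by
  have hIne : Nonempty I := Fintype.card_pos_iff.1 (by omega)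
  let e : Grid I m → ℕ := fun x => (Fintype.equivFin (Grid I m) x : ℕ)
  have he : Function.Injective e := fun a b h =>
    (Fintype.equivFin (Grid I m)).injective (Fin.ext h)
  let e' : I → ℕ := fun x => (Fintype.equivFin I x : ℕ)
  have he' : Function.Injective e' := fun a b h =>
    (Fintype.equivFin I).injective (Fin.ext h)
  let u : I → (Grid I m ⊕ I) → Lex (ℕ × ℕ) := fun i r =>
    Sum.elim (fun x => toLex (1 + (x.1 i : ℕ), e x))
      (fun j => if j = i then toLex (0, 0) else toLex (m + 2, e' j)) r
  have hlt : ∀ (x : Grid I m) i, (x.1 i : ℕ) < m + 1 := fun x i => (x.1 i).2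
  have hu : ∀ i, Function.Injective (u i) := by
    intro i a b hab
    rcases a with a | a <;> rcases b with b | b
    · simp only [u, Sum.elim_inl, toLex_inj, Prod.mk.injEq] at hab
      rw [he hab.2]
    · simp only [u, Sum.elim_inl, Sum.elim_inr] at hab
      have := hlt a i
      split_ifs at hab <;> simp only [toLex_inj, Prod.mk.injEq] at hab <;> omega
    · simp only [u, Sum.elim_inl, Sum.elim_inr] at hab
      have := hlt b i
      split_ifs at hab <;> simp only [toLex_inj, Prod.mk.injEq] at hab <;> omega
    · simp only [u, Sum.elim_inr] at hab
      split_ifs at hab with h1 h2 h2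
      · rw [h1, h2]
      · simp only [toLex_inj, Prod.mk.injEq] at hab; omega
      · simp only [toLex_inj, Prod.mk.injEq] at hab; omega
      · simp only [toLex_inj, Prod.mk.injEq] at hab
        rw [he' hab.2]
  obtain ⟨σ, hσ, hcol⟩ := scarf hu hI Sum.inr
    (by
      intro i y
      rcases y with y | y
      · simp only [u, Sum.elim_inr, Sum.elim_inl, if_true, Prod.Lex.toLex_le_toLex]
        left; omega
      · simp only [u, Sum.elim_inr, if_true]
        split_ifs
        · exact le_rfl
        · rw [Prod.Lex.toLex_le_toLex]; left; simp)
    (by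
      intro y hy i j hij
      rcases y with y | y
      · simp only [u, Sum.elim_inr, Sum.elim_inl, if_neg hij.symm, Prod.Lex.toLex_lt_toLex]
        left; have := hlt y i; omega
      · exact absurd ⟨y, rfl⟩ hy)
    (Sum.elim lab id) (fun i => rfl)
  set C : Finset I := Finset.univ.filter (fun i => Sum.inr i ∉ σ) with hC
  have hdom : ∀ y : Grid I m, ∃ i ∈ C, ∀ x : Grid I m, Sum.inl x ∈ σ →
      (y.1 i : ℕ) ≤ x.1 i := by
    intro y
    obtain ⟨i, hi⟩ := hσ (Sum.inl y)
    refine ⟨i, ?_, fun x hx => ?_⟩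
    · simp only [hC, Finset.mem_filter, Finset.mem_univ, true_and]
      intro h
      have := hi _ h
      simp only [u, Sum.elim_inr, Sum.elim_inl, if_true, Prod.Lex.toLex_le_toLex] at this
      omega
    · have := hi _ hx
      simp only [u, Sum.elim_inl, Prod.Lex.toLex_le_toLex] at this
      omega
  have hcolor : ∀ i ∈ C, ∃ x : Grid I m, Sum.inl x ∈ σ ∧ lab x = i := by
    intro i hi
    have : i ∈ σ.image (Sum.elim lab id) := by rw [hcol]; simp
    obtain ⟨r, hr, hri⟩ := Finset.mem_image.1 this
    rcases r with x | j
    · exact ⟨x, hr, hri⟩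
    · simp only [Sum.elim_inr, id] at hri
      subst hri
      simp only [hC, Finset.mem_filter, Finset.mem_univ, true_and] at hi
      exact absurd hr hi
  obtain ⟨y₀, -⟩ := exists_grid (I := I) m (fun _ => 0) (by simp)
  obtain ⟨i₀, hi₀, -⟩ := hdom y₀
  obtain ⟨x₀, hx₀, -⟩ := hcolor i₀ hi₀
  have hmin : ∀ i, ∃ z : Grid I m, Sum.inl z ∈ σ ∧ ∀ x : Grid I m, Sum.inl x ∈ σ →
      (z.1 i : ℕ) ≤ x.1 i := by
    intro i
    obtain ⟨z, hz, hz'⟩ := Finset.exists_min_image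
      (Finset.univ.filter (fun x : Grid I m => Sum.inl x ∈ σ)) (fun x => (x.1 i : ℕ))
      ⟨x₀, by simpa using hx₀⟩
    exact ⟨z, by simpa using hz, fun x hx => hz' x (by simpa using hx)⟩
  choose z hz1 hz2 using hmin
  let a : I → ℕ := fun i => ((z i).1 i : ℕ)
  have hsum : m < ∑ i, (if i ∈ C then a i + 1 else 0) := by
    by_contra hcon
    obtain ⟨y, hy⟩ := exists_grid m _ (not_lt.1 hcon)
    obtain ⟨i, hi, hle⟩ := hdom y
    have h1 := hy i
    have h2 := hle (z i) (hz1 i)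
    rw [if_pos hi] at h1
    simp only [a] at h1
    omega
  have hbound : ∀ x : Grid I m, Sum.inl x ∈ σ → ∀ i,
      (x.1 i : ℕ) ≤ (if i ∈ C then a i else 0) + Fintype.card I := by
    intro x hx i
    by_contra hcon
    push Not at hcon
    have h1 : ∑ j, ((if j ∈ C then a j + 1 else 0) + if j = i then Fintype.card I else 0) ≤
        ∑ j, ((x.1 j : ℕ) + 1) := by
      apply Finset.sum_le_sum
      intro j _
      have h2 : a j ≤ x.1 j := hz2 j x hx
      by_cases hj : j = i
      · subst hj
        split_ifs at hcon ⊢ <;> omega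
      · rw [if_neg hj]
        split_ifs <;> omega
    rw [Finset.sum_add_distrib, Finset.sum_add_distrib, x.2] at h1
    simp only [Finset.sum_ite_eq', Finset.mem_univ, if_true, Finset.sum_const, Finset.card_univ,
      smul_eq_mul, mul_one] at h1
    omega
  refine ⟨x₀, fun i => ?_⟩
  by_cases hi : i ∈ C
  · right
    obtain ⟨y, hy, hyi⟩ := hcolor i hi
    refine ⟨y, hyi, fun j => ?_⟩
    have h1 := hbound x₀ hx₀ j
    have h2 := hbound y hy j
    have h3 : a j ≤ x₀.1 j := hz2 j x₀ hx₀
    have h4 : a j ≤ y.1 j := hz2 j y hy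
    split_ifs at h1 h2 <;> omega
  · left
    have h1 := hbound x₀ hx₀ i
    rw [if_neg hi] at h1
    omega

/-- Points of the grid scaled to the simplex. -/
noncomputable def gridPt {I : Type*} [Fintype I] (m : ℕ) (x : Grid I (m + 1)) : stdSimplex ℝ I :=
  ⟨fun i => ((x.1 i : ℕ) : ℝ) / ((m : ℝ) + 1), fun i => by positivity, by
    rw [← Finset.sum_div]
    have : ∑ i, ((x.1 i : ℕ) : ℝ) = (m : ℝ) + 1 := by exact_mod_cast x.2
    rw [this]
    exact div_self (by positivity)⟩

theorem simplex_map {I : Type*} [Fintype I] [Nonempty I] (g : stdSimplex ℝ I → I → ℝ)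
    (hg : Continuous g) (hsum : ∀ x, ∑ i, g x i = 1)
    (hface : ∀ x : stdSimplex ℝ I, ∀ i, x.1 i = 0 → g x i = 0) :
    ∃ x, ∀ i, g x i ≤ 1 / Fintype.card I := by
  have hcpos : (0 : ℝ) < Fintype.card I := by exact_mod_cast Fintype.card_pos
  have hex : ∀ x, ∃ i, g x i ≤ 1 / Fintype.card I := by
    intro x
    by_contra hcon
    push Not at hcon
    have := Finset.sum_lt_sum_of_nonempty (s := Finset.univ) Finset.univ_nonempty
      (fun i _ => hcon i)
    rw [hsum] at this
    simp only [Finset.sum_const, Finset.card_univ, nsmul_eq_mul] at this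
    rw [mul_one_div_cancel hcpos.ne'] at this
    exact lt_irrefl _ this
  by_cases hI : 2 ≤ Fintype.card I
  · choose lab hlab using hex
    have hG := fun m : ℕ => grid_sperner hI (m + 1) (fun x => lab (gridPt m x))
    choose x₀ hx₀ using hG
    haveI : CompactSpace (stdSimplex ℝ I) := isCompact_iff_compactSpace.1 (isCompact_stdSimplex ℝ I)
    obtain ⟨x, φ, hφ, hlim⟩ := CompactSpace.tendsto_subseq (fun m => gridPt m (x₀ m))
    refine ⟨x, fun i => ?_⟩
    by_contra hcon
    push Not at hcon
    have hxi : 0 < x.1 i := by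
      rcases (x.2.1 i).lt_or_eq with h | h
      · exact h
      · rw [hface x i h.symm] at hcon
        exact absurd hcon (not_lt.2 (by positivity))
    have herr : Filter.Tendsto (fun k : ℕ => (Fintype.card I : ℝ) / ((φ k : ℝ) + 1)) Filter.atTop
        (nhds 0) :=
      (tendsto_const_div_atTop_nhds_zero_nat (Fintype.card I : ℝ)).comp
        ((Filter.tendsto_add_atTop_nat 1).comp hφ.tendsto_atTop) |>.congr (by intro k; simp)
    have hcoord : ∀ j, Filter.Tendsto (fun k => (gridPt (φ k) (x₀ (φ k))).1 j) Filter.atTop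
        (nhds (x.1 j)) := fun j =>
      (((continuous_apply j).comp continuous_subtype_val).tendsto x).comp hlim
    have hev : ∀ᶠ k in Filter.atTop, ∃ y : Grid I (φ k + 1), lab (gridPt (φ k) y) = i ∧
        ∀ j, |(gridPt (φ k) y).1 j - (gridPt (φ k) (x₀ (φ k))).1 j| ≤
          (Fintype.card I : ℝ) / ((φ k : ℝ) + 1) := by
      filter_upwards [herr.eventually_lt (hcoord i) hxi] with k hk
      rcases hx₀ (φ k) i with h | ⟨y, hy, hyj⟩
      · exfalso
        have : (gridPt (φ k) (x₀ (φ k))).1 i ≤ (Fintype.card I : ℝ) / ((φ k : ℝ) + 1) := by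
          simp only [gridPt]
          gcongr
        exact absurd hk (not_lt.2 this)
      · refine ⟨y, hy, fun j => ?_⟩
        obtain ⟨h1, h2⟩ := hyj j
        have h1' : ((y.1 j : ℕ) : ℝ) ≤ (((x₀ (φ k)).1 j : ℕ) : ℝ) + Fintype.card I := by
          exact_mod_cast h1
        have h2' : (((x₀ (φ k)).1 j : ℕ) : ℝ) ≤ ((y.1 j : ℕ) : ℝ) + Fintype.card I := by
          exact_mod_cast h2
        simp only [gridPt]
        rw [← sub_div, abs_div, abs_of_pos (by positivity : (0 : ℝ) < (φ k : ℝ) + 1)]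
        gcongr
        rw [abs_le]
        constructor <;> linarith
    have hpos : ∀ᶠ z in nhds x, 1 / (Fintype.card I : ℝ) < g z i :=
      (((continuous_apply i).comp hg).tendsto x).eventually_const_lt hcon
    -- choose the points
    have hev2 : ∀ k, ∃ w : stdSimplex ℝ I, (∃ y : Grid I (φ k + 1), lab (gridPt (φ k) y) = i ∧
        ∀ j, |(gridPt (φ k) y).1 j - (gridPt (φ k) (x₀ (φ k))).1 j| ≤
          (Fintype.card I : ℝ) / ((φ k : ℝ) + 1)) → (lab w = i ∧
        ∀ j, |w.1 j - (gridPt (φ k) (x₀ (φ k))).1 j| ≤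
          (Fintype.card I : ℝ) / ((φ k : ℝ) + 1)) := by
      intro k
      by_cases h : ∃ y : Grid I (φ k + 1), lab (gridPt (φ k) y) = i ∧
        ∀ j, |(gridPt (φ k) y).1 j - (gridPt (φ k) (x₀ (φ k))).1 j| ≤
          (Fintype.card I : ℝ) / ((φ k : ℝ) + 1)
      · obtain ⟨y, hy⟩ := h
        exact ⟨gridPt (φ k) y, fun _ => hy⟩
      · exact ⟨x, fun h' => absurd h' h⟩
    choose w hw using hev2
    have hev3 : ∀ᶠ k in Filter.atTop, lab (w k) = i ∧
        ∀ j, |(w k).1 j - (gridPt (φ k) (x₀ (φ k))).1 j| ≤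
          (Fintype.card I : ℝ) / ((φ k : ℝ) + 1) := hev.mono (fun k hk => hw k hk)
    have hwlim : Filter.Tendsto w Filter.atTop (nhds x) := by
      rw [tendsto_subtype_rng, tendsto_pi_nhds]
      intro j
      have hdiff : Filter.Tendsto (fun k => (w k).1 j - (gridPt (φ k) (x₀ (φ k))).1 j)
          Filter.atTop (nhds 0) :=
        squeeze_zero_norm' (hev3.mono (fun k hk => hk.2 j)) herr
      have := hdiff.add (hcoord j)
      simpa using this
    obtain ⟨k, hk1, hk2⟩ := (hev3.and (hwlim.eventually hpos)).exists
    have := hlab (w k)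
    rw [hk1.1] at this
    exact absurd hk2 (not_lt.2 this)
  · have hI1 : Fintype.card I = 1 := by
      have := Fintype.card_pos (α := I); omega
    obtain ⟨i₀⟩ := ‹Nonempty I›
    refine ⟨⟨Pi.single i₀ 1, single_mem_stdSimplex ℝ i₀⟩, fun i => ?_⟩
    have h := hsum ⟨Pi.single i₀ 1, single_mem_stdSimplex ℝ i₀⟩
    haveI : Subsingleton I := Fintype.card_le_one_iff_subsingleton.1 hI1.le
    rw [Fintype.sum_eq_single i (fun j hj => absurd (Subsingleton.elim _ _) hj)] at h
    rw [h, hI1]; simp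

/-- Sperner's lemma (the case `|I| = 1` of the multicolored theorem): if `f : K → PN` is a
subdivision and `c` is a Sperner coloring of `f`, then some face `σ ∈ K` uses all the
colors: `c σ = N`. -/
theorem sperner_lemma {V N : Type*} [Fintype V] [Fintype N] [DecidableEq N] [Nonempty N]
    (K : Finset (Finset V)) (hK : IsComplex K)
    (f : Finset V → Finset N)
    (hf : IsSubdivision K (Finset.univ : Finset (Finset N)) f)
    (c : Finset V → Finset N)
    (hc : IsSpernerColoring K (Finset.univ : Finset (Finset N)) f c) :
    ∃ σ ∈ K, c σ = (Finset.univ : Finset N) := by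
  obtain ⟨-, h, hh⟩ := hf
  obtain ⟨⟨c₀, hc₀⟩, -, hcf⟩ := hc
  have hreal : ∀ x ∈ stdSimplex ℝ N, x ∈ realization (Finset.univ : Finset (Finset N)) :=
    fun x hx => ⟨hx.1, hx.2, Finset.mem_univ _⟩
  let ι : stdSimplex ℝ N → realization (Finset.univ : Finset (Finset N)) :=
    fun x => ⟨x.1, hreal x.1 x.2⟩
  have hι : Continuous ι := continuous_subtype_val.subtype_mk _
  let P : (V → ℝ) → N → ℝ := fun k n => ∑ v, if c₀ v = n then k v else 0
  have hP : Continuous P := by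
    refine continuous_pi (fun n => continuous_finset_sum _ (fun v _ => ?_))
    by_cases hv : c₀ v = n
    · simp only [hv, if_true]; exact continuous_apply v
    · simp only [hv, if_false]; exact continuous_const
  have hPsum : ∀ k, ∑ n, P k n = ∑ v, k v := by
    intro k
    simp only [P]
    rw [Finset.sum_comm]
    simp
  obtain ⟨x, hx⟩ := simplex_map (fun x => P (h.symm (ι x)).1)
    (hP.comp (continuous_subtype_val.comp (h.symm.continuous.comp hι)))
    (fun x => by rw [hPsum]; exact (h.symm (ι x)).2.2.1)
    (by
      intro x n hxn
      apply Finset.sum_eq_zero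
      intro v _
      split_ifs with hv
      · by_contra hne
        have hkpos : 0 < (h.symm (ι x)).1 v :=
          lt_of_le_of_ne ((h.symm (ι x)).2.1 v) (Ne.symm hne)
        have h1 : n ∈ c (spt (h.symm (ι x)).1) := by
          rw [hc₀, ← hv]
          apply Finset.mem_image_of_mem
          simpa [spt] using hkpos
        have h2 := hcf _ (h.symm (ι x)).2.2.2 h1
        rw [← hh, Homeomorph.apply_symm_apply] at h2
        simp only [spt, Finset.mem_filter, Finset.mem_univ, true_and] at h2
        change 0 < x.1 n at h2
        rw [hxn] at h2
        exact lt_irrefl _ h2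
      · rfl)
  refine ⟨spt (h.symm (ι x)).1, (h.symm (ι x)).2.2.2, ?_⟩
  rw [Finset.eq_univ_iff_forall]
  intro n
  by_contra hn
  have hcpos : (0 : ℝ) < Fintype.card N := by exact_mod_cast Fintype.card_pos
  have hzero : P (h.symm (ι x)).1 n = 0 := by
    apply Finset.sum_eq_zero
    intro v _
    split_ifs with hv
    · by_contra hne
      have hkpos : 0 < (h.symm (ι x)).1 v :=
        lt_of_le_of_ne ((h.symm (ι x)).2.1 v) (Ne.symm hne)
      apply hn
      rw [hc₀, ← hv]
      apply Finset.mem_image_of_mem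
      simpa [spt] using hkpos
    · rfl
  have hlt : ∑ i, P (h.symm (ι x)).1 i < ∑ _i : N, 1 / (Fintype.card N : ℝ) := by
    apply Finset.sum_lt_sum (fun i _ => hx i)
    exact ⟨n, Finset.mem_univ _, by rw [hzero]; positivity⟩
  rw [hPsum, (h.symm (ι x)).2.2.1] at hlt
  simp only [Finset.sum_const, Finset.card_univ, nsmul_eq_mul] at hlt
  rw [mul_one_div_cancel hcpos.ne'] at hlt
  exact lt_irrefl _ hlt
end
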